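/- Let V = (v_1, …, v_{n+1}) be unit vectors in ℝ² with v_1 = (1,0) and v_{n+1} = (−1,0) such that 0 = arg(v_1) ≤ arg(v_2) ≤ ⋯ ≤ arg(v_{n+1}) = π. Then Σ_{i=1}^n ‖v_i − v_{i+1}‖² ≤ 4. -/

import Mathlib

/-!
Write `v_i = (c_i, s_i)`. Since all arguments lie in `[0, π]`, every `v_i` is in the closed upper
half plane (`arg2_le_pi_imp_nonneg`), and monotonicity of the arguments means that `c_i` decreases.
For two such unit vectors, `‖v - w‖² ≤ 2 (c - c')` (`norm_sub_sq_le`): this amounts to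
`(1 - c)(1 + c') ≤ s s'`, whose square is `(1 - c)(1 + c') ≤ (1 + c)(1 - c')` up to the factor
`(1 - c)(1 + c')`, i.e. `c' ≤ c`. The right-hand sides telescope to `2 (1 - (-1)) = 4`.
-/

open Real

/-- The argument `θ ∈ [0, 2π)` of a (unit) vector `v ∈ ℝ²`, so that
`v = (cos θ, sin θ)`. -/
noncomputable def arg2 (v : EuclideanSpace ℝ (Fin 2)) : ℝ :=
  if 0 ≤ v 1 then Real.arccos (v 0) else 2 * Real.pi - Real.arccos (v 0)

lemma sq_add_sq_of_norm_one {v : EuclideanSpace ℝ (Fin 2)} (hv : ‖v‖ = 1) :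
    v 0 ^ 2 + v 1 ^ 2 = 1 := by
  have h := EuclideanSpace.real_norm_sq_eq v
  rw [hv, Fin.sum_univ_two] at h
  linarith

lemma arg2_le_pi_imp_nonneg {v : EuclideanSpace ℝ (Fin 2)} (hv : ‖v‖ = 1)
    (h : arg2 v ≤ π) : 0 ≤ v 1 := by
  by_contra hneg
  rw [arg2, if_neg hneg] at h
  have hsq := sq_add_sq_of_norm_one hv
  have hpi : Real.arccos (v 0) = π := le_antisymm (Real.arccos_le_pi _) (by linarith)
  have hle : v 0 ≤ -1 := Real.arccos_eq_pi.mp hpi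
  push Not at hneg
  nlinarith

/-- The squared chord between two unit vectors of the upper half plane is at most twice the
decrease of the first coordinate; equivalently, the angle at `v` in the triangle
`(1, 0), v, w` is not acute. -/
lemma norm_sub_sq_le {v w : EuclideanSpace ℝ (Fin 2)} (hv : ‖v‖ = 1) (hw : ‖w‖ = 1)
    (hv1 : 0 ≤ v 1) (hw1 : 0 ≤ w 1) (h : w 0 ≤ v 0) :
    ‖v - w‖ ^ 2 ≤ 2 * (v 0 - w 0) := by
  have ev := sq_add_sq_of_norm_one hv
  have ew := sq_add_sq_of_norm_one hw
  have hc : 0 ≤ 1 - v 0 := by nlinarith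
  have hc' : 0 ≤ 1 + w 0 := by nlinarith
  have key : (1 - v 0) * (1 + w 0) ≤ v 1 * w 1 := by
    refine (sq_le_sq₀ (mul_nonneg hc hc') (mul_nonneg hv1 hw1)).mp ?_
    have e1 : v 1 ^ 2 = (1 - v 0) * (1 + v 0) := by linarith
    have e2 : w 1 ^ 2 = (1 - w 0) * (1 + w 0) := by linarith
    rw [mul_pow (v 1), e1, e2]
    nlinarith [mul_nonneg (mul_nonneg hc hc') (sub_nonneg.mpr h)]
  rw [EuclideanSpace.real_norm_sq_eq, Fin.sum_univ_two]
  simp only [PiLp.sub_apply]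
  nlinarith

/-- Lemma 3.1: if `V = (v₁, …, v_{n+1})` are unit vectors in `ℝ²` with `v₁ = (1,0)`,
`v_{n+1} = (−1,0)` and `0 = arg(v₁) ≤ arg(v₂) ≤ ⋯ ≤ arg(v_{n+1}) = π`, then
`Σ_{i=1}^n ‖vᵢ − v_{i+1}‖² ≤ 4`. -/
theorem stmt_8 (n : ℕ) (V : Fin (n + 1) → EuclideanSpace ℝ (Fin 2))
    (hunit : ∀ i, ‖V i‖ = 1)
    (hfirst : V 0 0 = 1 ∧ V 0 1 = 0)
    (hlast : V (Fin.last n) 0 = -1 ∧ V (Fin.last n) 1 = 0)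
    (harg0 : arg2 (V 0) = 0)
    (hargl : arg2 (V (Fin.last n)) = π)
    (hmono : Monotone fun i => arg2 (V i)) :
    ∑ i : Fin n, ‖V i.castSucc - V i.succ‖ ^ 2 ≤ 4 := by
  have hs : ∀ i, 0 ≤ V i 1 := fun i =>
    arg2_le_pi_imp_nonneg (hunit i) ((hmono (Fin.le_last i)).trans_eq hargl)
  have hc : ∀ i : Fin n, V i.succ 0 ≤ V i.castSucc 0 := by
    intro i
    have h : arg2 (V i.castSucc) ≤ arg2 (V i.succ) := hmono i.castSucc_le_succ
    rw [arg2, arg2, if_pos (hs _), if_pos (hs _)] at h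
    have e1 := sq_add_sq_of_norm_one (hunit i.castSucc)
    have e2 := sq_add_sq_of_norm_one (hunit i.succ)
    exact (Real.strictAntiOn_arccos.le_iff_ge
      ⟨by nlinarith [sq_nonneg (V i.castSucc 1)], by nlinarith [sq_nonneg (V i.castSucc 1)]⟩
      ⟨by nlinarith [sq_nonneg (V i.succ 1)], by nlinarith [sq_nonneg (V i.succ 1)]⟩).mp h
  have htel : ∑ i : Fin n, (V i.castSucc 0 - V i.succ 0) = V 0 0 - V (Fin.last n) 0 := by
    have h1 := Fin.sum_univ_succ fun i => V i 0
    have h2 := Fin.sum_univ_castSucc fun i => V i 0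
    rw [Finset.sum_sub_distrib]
    linarith
  calc ∑ i : Fin n, ‖V i.castSucc - V i.succ‖ ^ 2
      ≤ ∑ i : Fin n, 2 * (V i.castSucc 0 - V i.succ 0) :=
        Finset.sum_le_sum fun i _ =>
          norm_sub_sq_le (hunit _) (hunit _) (hs _) (hs _) (hc i)
    _ = 4 := by
        rw [← Finset.mul_sum, htel, hfirst.1, hlast.1]
        norm_num
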